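/- Let (X, μ) be a measure space, let r : X → ℝ be measurable, and let ψ : X → ℂ be measurable. Suppose there are constants c > 0, K₁ ≥ 0, K₂ ≥ 0, real numbers r₁ ≤ r₂, and h₀ > 0 such that for every h ∈ (0, h₀), c · h · ∫_X e^{2 r(x)/h} |ψ(x)|² dμ(x) ≤ K₁ · e^{4 r₂/h} + K₂ · h · e^{4 r₁/h}. Then ψ = 0 μ-almost everywhere on the set {x : r(x) > 2 r₂}. -/

import Mathlib

open MeasureTheory Real

/-- Measure-theoretic vanishing step for the inhomogeneous problem: if
`c h ∫ e^{2r/h} |ψ|² dμ ≤ K₁ e^{4r₂/h} + K₂ h e^{4r₁/h}` for all `h ∈ (0, h₀)`, with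
`r₁ ≤ r₂`, then `ψ = 0` a.e. on `{r > 2r₂}`. -/
theorem vanishing_from_weighted_bound_inhomogeneous
    {X : Type*} [MeasurableSpace X] (μ : Measure X)
    (r : X → ℝ) (hr : Measurable r) (ψ : X → ℂ) (hψ : Measurable ψ)
    (c K₁ K₂ r₁ r₂ h₀ : ℝ) (hc : 0 < c) (hK₁ : 0 ≤ K₁) (hK₂ : 0 ≤ K₂)
    (hr₁₂ : r₁ ≤ r₂) (hh₀ : 0 < h₀)
    (hbound : ∀ h ∈ Set.Ioo (0 : ℝ) h₀,
      ENNReal.ofReal (c * h) *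
          ∫⁻ x, ENNReal.ofReal (Real.exp (2 * r x / h)) * ENNReal.ofReal (‖ψ x‖ ^ 2) ∂μ ≤
        ENNReal.ofReal (K₁ * Real.exp (4 * r₂ / h)) +
          ENNReal.ofReal (K₂ * h * Real.exp (4 * r₁ / h))) :
    ∀ᵐ x ∂μ, 2 * r₂ < r x → ψ x = 0 := by
  have key : ∀ n : ℕ, ∀ᵐ x ∂μ, 2 * r₂ + 1 / ((n : ℝ) + 1) ≤ r x → ψ x = 0 := by
    intro n
    have hδ : (0 : ℝ) < 1 / ((n : ℝ) + 1) := by positivity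
    generalize (1 : ℝ) / ((n : ℝ) + 1) = δ at hδ
    have hS : MeasurableSet {x | 2 * r₂ + δ ≤ r x} := measurableSet_le measurable_const hr
    have hm : Measurable fun x => ENNReal.ofReal (‖ψ x‖ ^ 2) := by fun_prop
    set I := ∫⁻ x in {x | 2 * r₂ + δ ≤ r x}, ENNReal.ofReal (‖ψ x‖ ^ 2) ∂μ with hI
    have hle : ∀ h ∈ Set.Ioo (0 : ℝ) h₀,
        I ≤ ENNReal.ofReal ((K₁ + K₂ * h₀) / (2 * c * δ ^ 2) * h) := by
      intro h hh
      have hpos : 0 < h := hh.1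
      have hE : 0 < Real.exp (4 * r₂ / h) := Real.exp_pos _
      have h1 : ENNReal.ofReal (Real.exp ((4 * r₂ + 2 * δ) / h)) * I ≤
          ∫⁻ x, ENNReal.ofReal (Real.exp (2 * r x / h)) * ENNReal.ofReal (‖ψ x‖ ^ 2) ∂μ := by
        rw [hI, ← lintegral_const_mul _ hm]
        refine le_trans (setLIntegral_mono' hS ?_) (setLIntegral_le_lintegral _ _)
        intro x hx
        have hx' : 2 * r₂ + δ ≤ r x := hx
        gcongr
        linarith
      have h2 : ENNReal.ofReal (c * h * Real.exp ((4 * r₂ + 2 * δ) / h)) * I ≤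
          ENNReal.ofReal ((K₁ + K₂ * h₀) * Real.exp (4 * r₂ / h)) := by
        rw [ENNReal.ofReal_mul (by positivity), mul_assoc]
        refine (mul_le_mul_right h1 _).trans ((hbound h hh).trans ?_)
        rw [← ENNReal.ofReal_add (by positivity) (by positivity), add_mul]
        apply ENNReal.ofReal_le_ofReal
        have := hh.2.le
        gcongr
      have h3 : 2 * c * δ ^ 2 / h * Real.exp (4 * r₂ / h) ≤
          c * h * Real.exp ((4 * r₂ + 2 * δ) / h) := by
        rw [add_div, Real.exp_add]
        have hq := Real.quadratic_le_exp_of_nonneg (show 0 ≤ 2 * δ / h by positivity)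
        have hq2 : (2 * δ / h) ^ 2 / 2 ≤ Real.exp (2 * δ / h) := by
          have : 0 ≤ 2 * δ / h := by positivity
          linarith
        calc 2 * c * δ ^ 2 / h * Real.exp (4 * r₂ / h)
            = c * h * (Real.exp (4 * r₂ / h) * ((2 * δ / h) ^ 2 / 2)) := by
              field_simp
          _ ≤ _ := by gcongr
      have hA : 0 < 2 * c * δ ^ 2 / h * Real.exp (4 * r₂ / h) := by positivity
      have h4 := (mul_le_mul_left (ENNReal.ofReal_le_ofReal h3) I).trans h2
      have h5 : I ≤ ENNReal.ofReal ((K₁ + K₂ * h₀) * Real.exp (4 * r₂ / h)) /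
          ENNReal.ofReal (2 * c * δ ^ 2 / h * Real.exp (4 * r₂ / h)) := by
        rw [ENNReal.le_div_iff_mul_le (Or.inl (by simpa using hA))
          (Or.inl ENNReal.ofReal_ne_top), mul_comm]
        exact h4
      rw [← ENNReal.ofReal_div_of_pos hA] at h5
      refine h5.trans (le_of_eq ?_)
      congr 1
      field_simp
    have hI0 : I = 0 := by
      have ht : Filter.Tendsto
          (fun h : ℝ => ENNReal.ofReal ((K₁ + K₂ * h₀) / (2 * c * δ ^ 2) * h))
          (nhdsWithin 0 (Set.Ioi 0)) (nhds 0) := by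
        have hcont : Continuous
            (fun h : ℝ => ENNReal.ofReal ((K₁ + K₂ * h₀) / (2 * c * δ ^ 2) * h)) :=
          ENNReal.continuous_ofReal.comp (by fun_prop)
        have := (hcont.tendsto 0).mono_left (nhdsWithin_le_nhds (s := Set.Ioi 0))
        simpa using this
      refine le_antisymm (ge_of_tendsto ht ?_) zero_le
      filter_upwards [Ioo_mem_nhdsGT hh₀] with h hh using hle h hh
    rw [hI, lintegral_eq_zero_iff hm] at hI0
    have := (ae_restrict_iff' hS).1 hI0
    filter_upwards [this] with x hx hxr
    have h0 := hx hxr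
    simp only [Pi.zero_apply, ENNReal.ofReal_eq_zero] at h0
    have : ‖ψ x‖ = 0 := by
      have := le_antisymm h0 (sq_nonneg _)
      exact pow_eq_zero_iff (two_ne_zero) |>.1 this
    exact norm_eq_zero.1 this
  filter_upwards [ae_all_iff.2 key] with x hx hxr
  obtain ⟨n, hn⟩ := exists_nat_one_div_lt (sub_pos.2 hxr)
  exact hx n (by linarith)
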